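/- arXiv:1803.05975 — 2 statements merged into one kernel-verified Lean document; each statement's English description precedes it below -/
import Mathlib

section
/- Let g : ℝⁿ → ℝ be a differentiable convex function, E a real m×n matrix, q ∈ ℝᵐ, and let z* = (x*, ν*) be an equilibrium of the primal-dual dynamics, i.e. ∇g(x*) + Eᵀν* = 0 and Ex* = q. Then for every solution z(t) = (x(t), ν(t)) of the primal-dual dynamics, the distance t ↦ ‖z(t) − z*‖₂ is non-increasing. -/
open Matrix

/-!
Along a solution, half the derivative of `‖z - z*‖²` is the inner product of `z - z*` with the
primal-dual field. By the equilibrium conditions the terms in `E` and `Eᵀ` cancel, being the two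
halves of a skew-symmetric operator, and what remains is
`-⟪∇g(x) - ∇g(x*), x - x*⟫`. This is nonpositive because the gradient of a convex function is a
monotone operator.
-/

section Convex

variable {V : Type*} [NormedAddCommGroup V] [NormedSpace ℝ V]
  {s : Set V} {f : V → ℝ} {f' fa' fb' : V →L[ℝ] ℝ} {a b : V}

theorem hasFDerivWithinAt_apply_sub_le_sub_of_convexOn (hf : ConvexOn ℝ s f)
    (ha : a ∈ s) (hb : b ∈ s) (hf' : HasFDerivWithinAt f f' s a) :
    f' (b - a) ≤ f b - f a := by
  let line : ℝ →ᵃ[ℝ] V := AffineMap.lineMap a b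
  have line_zero : line 0 = a := AffineMap.lineMap_apply_zero a b
  have line_one : line 1 = b := AffineMap.lineMap_apply_one a b
  have convexOn_line : ConvexOn ℝ (line ⁻¹' s) (f ∘ line) := hf.comp_affineMap line
  have deriv_line : HasDerivWithinAt (f ∘ line) (f' (b - a)) (line ⁻¹' s) 0 := by
    rw [← line_zero] at hf'
    exact hf'.comp_hasDerivWithinAt 0 AffineMap.hasDerivWithinAt_lineMap (Set.mapsTo_preimage _ _)
  have deriv_le_slope : f' (b - a) ≤ slope (f ∘ line) 0 1 :=
    convexOn_line.le_slope_of_hasDerivWithinAt (by rwa [Set.mem_preimage, line_zero])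
      (by rwa [Set.mem_preimage, line_one]) one_pos deriv_line
  simpa [slope_def_field, line_zero, line_one] using deriv_le_slope

theorem hasFDerivWithinAt_apply_sub_le_apply_sub_of_convexOn (hf : ConvexOn ℝ s f)
    (ha : a ∈ s) (hb : b ∈ s) (hfa : HasFDerivWithinAt f fa' s a)
    (hfb : HasFDerivWithinAt f fb' s b) :
    fa' (b - a) ≤ fb' (b - a) :=
  calc
    fa' (b - a) ≤ f b - f a := hasFDerivWithinAt_apply_sub_le_sub_of_convexOn hf ha hb hfa
    _ = -(f a - f b) := (neg_sub _ _).symm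
    _ ≤ -fb' (a - b) :=
      neg_le_neg (hasFDerivWithinAt_apply_sub_le_sub_of_convexOn hf hb ha hfb)
    _ = fb' (b - a) := by rw [← map_neg, neg_sub]

end Convex

section DotProduct

variable {ι κ : Type*} [Fintype ι]

theorem hasDerivWithinAt_dotProduct {𝕜 : Type*} [NontriviallyNormedField 𝕜] {u v : 𝕜 → ι → 𝕜}
    {u' v' : ι → 𝕜} {s : Set 𝕜} {t : 𝕜} (hu : HasDerivWithinAt u u' s t)
    (hv : HasDerivWithinAt v v' s t) :
    HasDerivWithinAt (fun τ => u τ ⬝ᵥ v τ) (u' ⬝ᵥ v t + u t ⬝ᵥ v') s t := by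
  rw [hasDerivWithinAt_pi] at hu hv
  simpa only [dotProduct, Finset.sum_add_distrib] using
    HasDerivWithinAt.fun_sum fun i (_ : i ∈ Finset.univ) => (hu i).fun_mul (hv i)

theorem hasDerivWithinAt_dotProduct_sub_self {𝕜 : Type*} [NontriviallyNormedField 𝕜]
    {u : 𝕜 → ι → 𝕜} {u' : ι → 𝕜} {s : Set 𝕜} {t : 𝕜} (hu : HasDerivWithinAt u u' s t)
    (c : ι → 𝕜) :
    HasDerivWithinAt (fun τ => (u τ - c) ⬝ᵥ (u τ - c)) (2 * ((u t - c) ⬝ᵥ u')) s t := by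
  have hsub : HasDerivWithinAt (fun τ => u τ - c) u' s t := hu.sub_const c
  exact (hasDerivWithinAt_dotProduct hsub hsub).congr_deriv
    (by rw [dotProduct_comm u', two_mul])

variable [Fintype κ]

theorem dotProduct_transpose_mulVec_comm {R : Type*} [CommSemiring R] (E : Matrix κ ι R)
    (u : ι → R) (w : κ → R) : u ⬝ᵥ Eᵀ *ᵥ w = w ⬝ᵥ E *ᵥ u := by
  rw [mulVec_transpose, dotProduct_comm, dotProduct_mulVec]

theorem dotProduct_primalDual_field_eq_neg {R : Type*} [CommRing R] {E : Matrix κ ι R} {q : κ → R}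
    {ps xs : ι → R} {νs : κ → R} (hdual : ps + Eᵀ *ᵥ νs = 0) (hprimal : E *ᵥ xs = q)
    (p x : ι → R) (ν : κ → R) :
    (x - xs) ⬝ᵥ (-p - Eᵀ *ᵥ ν) + (ν - νs) ⬝ᵥ (E *ᵥ x - q) = -((p - ps) ⬝ᵥ (x - xs)) := by
  have primal_field : -p - Eᵀ *ᵥ ν = -(p - ps) - Eᵀ *ᵥ (ν - νs) := by
    rw [eq_neg_of_add_eq_zero_left hdual, mulVec_sub]
    abel
  have dual_field : E *ᵥ x - q = E *ᵥ (x - xs) := by rw [mulVec_sub, hprimal]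
  rw [primal_field, dual_field, dotProduct_sub, dotProduct_transpose_mulVec_comm, sub_add_cancel,
    dotProduct_neg, dotProduct_comm]

end DotProduct

theorem dotProduct_gradient_sub_nonneg_of_convexOn {ι : Type*} [Fintype ι] {g : (ι → ℝ) → ℝ}
    {G : (ι → ℝ) → ι → ℝ} (hg_diff : Differentiable ℝ g)
    (hg_grad : ∀ x v, fderiv ℝ g x v = G x ⬝ᵥ v) (hg_conv : ConvexOn ℝ Set.univ g)
    (a b : ι → ℝ) : 0 ≤ (G b - G a) ⬝ᵥ (b - a) := by
  rw [sub_dotProduct, sub_nonneg, ← hg_grad, ← hg_grad]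
  exact hasFDerivWithinAt_apply_sub_le_apply_sub_of_convexOn hg_conv (Set.mem_univ a)
    (Set.mem_univ b) (hg_diff a).hasFDerivAt.hasFDerivWithinAt
    (hg_diff b).hasFDerivAt.hasFDerivWithinAt

theorem stmt1_general {ι κ : Type*} [Fintype ι] [Fintype κ] {G : (ι → ℝ) → ι → ℝ}
    {E : Matrix κ ι ℝ} {q : κ → ℝ} {xs : ι → ℝ} {νs : κ → ℝ}
    (hG : ∀ y, 0 ≤ (G y - G xs) ⬝ᵥ (y - xs))
    (heq1 : G xs + Eᵀ *ᵥ νs = 0) (heq2 : E *ᵥ xs = q)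
    {D : Set ℝ} (hD : Convex ℝ D) {x : ℝ → ι → ℝ} {ν : ℝ → κ → ℝ}
    (hx : ∀ t ∈ D, HasDerivWithinAt x (-(G (x t)) - Eᵀ *ᵥ ν t) D t)
    (hν : ∀ t ∈ D, HasDerivWithinAt ν (E *ᵥ x t - q) D t) :
    AntitoneOn (fun t =>
      Real.sqrt ((x t - xs) ⬝ᵥ (x t - xs) + (ν t - νs) ⬝ᵥ (ν t - νs))) D := by
  refine Real.sqrt_monotone.comp_antitoneOn ?_
  have deriv_distSq (t : ℝ) (ht : t ∈ D) :
      HasDerivWithinAt (fun τ => (x τ - xs) ⬝ᵥ (x τ - xs) + (ν τ - νs) ⬝ᵥ (ν τ - νs))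
        (-(2 * ((G (x t) - G xs) ⬝ᵥ (x t - xs)))) D t :=
    ((hasDerivWithinAt_dotProduct_sub_self (hx t ht) xs).fun_add
      (hasDerivWithinAt_dotProduct_sub_self (hν t ht) νs)).congr_deriv <| by
        rw [← mul_add, dotProduct_primalDual_field_eq_neg heq1 heq2, mul_neg]
  exact antitoneOn_of_hasDerivWithinAt_nonpos hD
    (fun t ht => (deriv_distSq t ht).continuousWithinAt)
    (fun t ht => (deriv_distSq t (interior_subset ht)).mono interior_subset)
    (fun t _ => neg_nonpos.2 (mul_nonneg zero_le_two (hG (x t))))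

/-- If `z* = (x*, ν*)` is an equilibrium of the primal-dual dynamics
(`∇g(x*) + Eᵀν* = 0`, `Ex* = q`) for a differentiable convex `g`, then along any solution
`z(t) = (x(t), ν(t))` of the primal-dual dynamics the distance `t ↦ ‖z(t) - z*‖₂` is
non-increasing. -/
theorem stmt1 {n m : ℕ} (g : (Fin n → ℝ) → ℝ) (G : (Fin n → ℝ) → (Fin n → ℝ))
    (hg_diff : Differentiable ℝ g)
    (hg_grad : ∀ x v, fderiv ℝ g x v = G x ⬝ᵥ v)
    (hg_conv : ConvexOn ℝ Set.univ g)
    (E : Matrix (Fin m) (Fin n) ℝ) (q : Fin m → ℝ)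
    (xs : Fin n → ℝ) (νs : Fin m → ℝ)
    (heq1 : G xs + Eᵀ *ᵥ νs = 0) (heq2 : E *ᵥ xs = q)
    (x : ℝ → Fin n → ℝ) (ν : ℝ → Fin m → ℝ)
    (hx : ∀ t, HasDerivAt x (-(G (x t)) - Eᵀ *ᵥ ν t) t)
    (hν : ∀ t, HasDerivAt ν (E *ᵥ x t - q) t) :
    Antitone (fun t =>
      Real.sqrt ((x t - xs) ⬝ᵥ (x t - xs) + (ν t - νs) ⬝ᵥ (ν t - νs))) :=
  antitoneOn_univ.1 <| stmt1_general
    (dotProduct_gradient_sub_nonneg_of_convexOn hg_diff hg_grad hg_conv xs) heq1 heq2 convex_univ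
    (fun t _ => (hx t).hasDerivWithinAt) (fun t _ => (hν t).hasDerivWithinAt)
end

section
/- Let H be a symmetric positive definite n×n real matrix, E a real m×n matrix with full row rank m, and let 0 < α < 1/max{‖E‖₂, ‖EH^{−1/2}‖₂² + ‖H‖₂/4}. Then the symmetric block matrix Q = [[H − αEᵀE, (α/2)HEᵀ],[(α/2)EH, αEEᵀ]] is positive definite. (Equivalently, for every δz = (δx, δν) ∈ ℝⁿ⁺ᵐ one has δzᵀQδz = δxᵀ(H − αEᵀE − (α/4)H²)δx + α‖Eᵀδν + (1/2)Hδx‖₂², which is strictly positive for δz ≠ 0.) -/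
open Matrix
open scoped MatrixOrder

/-- The spectral (operator 2-)norm of a real matrix. -/
noncomputable def spectralNorm2 {m n : ℕ} (E : Matrix (Fin m) (Fin n) ℝ) : ℝ :=
  ‖LinearMap.toContinuousLinearMap (Matrix.toEuclideanLin E)‖

/-- The block matrix `Q = [[H - αEᵀE, (α/2)HEᵀ],[(α/2)EH, αEEᵀ]]`. -/
noncomputable def Qmat {n m : ℕ} (H : Matrix (Fin n) (Fin n) ℝ) (E : Matrix (Fin m) (Fin n) ℝ)
    (α : ℝ) : Matrix (Fin n ⊕ Fin m) (Fin n ⊕ Fin m) ℝ :=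
  fromBlocks (H - α • (Eᵀ * E)) ((α / 2) • (H * Eᵀ)) ((α / 2) • (E * H)) (α • (E * Eᵀ))

/-!
Completing the square in `δν` splits the form of `Q` into that of `H - αEᵀE - (α/4)H²` and
`α‖Eᵀδν + (1/2)Hδx‖²`; the latter controls `δν` once `δx = 0`, since `Eᵀ` is injective. Positivity
of the former is a Loewner-order estimate: conjugating `AᵀA ≤ ‖A‖² • 1`, for `A = EH^{-1/2}`, and
`H ≤ ‖H‖ • 1` by `H^{1/2}` gives `EᵀE ≤ ‖A‖² • H` and `H² ≤ ‖H‖ • H`, so `αEᵀE + (α/4)H²` is at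
most a multiple `t • H` with `t < 1`.
-/

theorem mul_lt_one_of_lt_one_div_max {K : Type*} [Field K] [LinearOrder K] [IsStrictOrderedRing K]
    {a b c : K} (hc : 0 < c) (h : c < 1 / max a b) : c * b < 1 := by
  have max_pos : 0 < max a b := one_div_pos.1 (hc.trans h)
  exact (mul_le_mul_of_nonneg_left (le_max_right a b) hc.le).trans_lt ((lt_div_iff₀ max_pos).1 h)

theorem mulVec_injective_of_rank_eq_card {m n K : Type*} [Finite m] [Fintype n] [Field K]
    {A : Matrix m n K} (hA : A.rank = Fintype.card n) : Function.Injective A.mulVec := by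
  rw [mulVec_injective_iff, linearIndependent_iff_card_eq_finrank_span, Set.finrank,
    ← rank_eq_finrank_span_cols, hA]

section GramBlocks

variable {ι κ μ R : Type*} [Fintype κ] [Fintype μ] [CommRing R] [StarRing R]

theorem star_dotProduct_fromBlocks_add_gram_mulVec [Fintype ι] (A : Matrix ι ι R)
    (B : Matrix μ ι R) (C : Matrix μ κ R) (c : R) (x : ι → R) (y : κ → R) :
    star (Sum.elim x y) ⬝ᵥ
        (fromBlocks (A + c • (Bᴴ * B)) (c • (Bᴴ * C)) (c • (Cᴴ * B)) (c • (Cᴴ * C)) *ᵥ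
          Sum.elim x y) =
      star x ⬝ᵥ (A *ᵥ x) + c * (star (B *ᵥ x + C *ᵥ y) ⬝ᵥ (B *ᵥ x + C *ᵥ y)) := by
  have star_elim : star (Sum.elim x y) = Sum.elim (star x) (star y) := by
    ext (_ | _) <;> rfl
  simp only [star_elim, fromBlocks_mulVec, Sum.elim_comp_inl, Sum.elim_comp_inr,
    sumElim_dotProduct_sumElim, add_mulVec, smul_mulVec, ← mulVec_mulVec, dotProduct_add,
    add_dotProduct, dotProduct_smul, smul_eq_mul, star_add, star_mulVec, ← dotProduct_mulVec]
  ring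

variable [PartialOrder R] [StarOrderedRing R] [NoZeroDivisors R]

theorem posDef_fromBlocks_add_gram [Finite ι] {A : Matrix ι ι R} (hA : A.PosDef)
    (B : Matrix μ ι R) {C : Matrix μ κ R} (hC : Function.Injective C.mulVec) {c : R}
    (hc : 0 < c) :
    (fromBlocks (A + c • (Bᴴ * B)) (c • (Bᴴ * C)) (c • (Cᴴ * B)) (c • (Cᴴ * C))).PosDef := by
  cases nonempty_fintype ι
  have star_c : star c = c := IsSelfAdjoint.of_nonneg hc.le
  refine .of_dotProduct_mulVec_pos ?_ fun z hz ↦ ?_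
  · simp [IsHermitian, fromBlocks_conjTranspose, star_c, hA.isHermitian.eq]
  · obtain ⟨x, y, rfl⟩ : ∃ x y, z = Sum.elim x y := ⟨z ∘ Sum.inl, z ∘ Sum.inr, by simp⟩
    rw [star_dotProduct_fromBlocks_add_gram_mulVec]
    rcases eq_or_ne x 0 with rfl | hx
    · have hy : y ≠ 0 := by
        rintro rfl
        exact hz (by ext (_ | _) <;> rfl)
      have hCy : C *ᵥ y ≠ 0 := fun h ↦ hy (hC (h.trans (mulVec_zero C).symm))
      have gram_pos : 0 < c * (star (C *ᵥ y) ⬝ᵥ (C *ᵥ y)) :=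
        (mul_nonneg hc.le (dotProduct_star_self_nonneg _)).lt_of_ne'
          (mul_ne_zero hc.ne' (dotProduct_star_self_pos_iff.2 hCy).ne')
      simpa using gram_pos
    · exact add_pos_of_pos_of_nonneg (hA.dotProduct_mulVec_pos hx)
        (mul_nonneg hc.le (dotProduct_star_self_nonneg _))

end GramBlocks

open scoped ComplexOrder in
theorem posDef_sub_of_le_smul {n 𝕜 : Type*} [RCLike 𝕜] {H M : Matrix n n 𝕜} (hH : H.PosDef)
    {t : ℝ} (ht : t < 1) (hM : M ≤ t • H) : (H - M).PosDef := by
  have split : H - M = (1 - t) • H + (t • H - M) := by module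
  rw [split]
  exact (hH.smul (sub_pos.2 ht)).add_posSemidef (le_iff.1 hM)

section LoewnerBounds

open scoped ComplexOrder Matrix.Norms.L2Operator

variable {m n 𝕜 : Type*} [Fintype m] [Fintype n] [DecidableEq n] [RCLike 𝕜]

theorem le_algebraMap_l2_opNorm_of_isSelfAdjoint {A : Matrix n n 𝕜} (hA : IsSelfAdjoint A) :
    A ≤ algebraMap ℝ (Matrix n n 𝕜) ‖A‖ := by
  cases subsingleton_or_nontrivial (Matrix n n 𝕜)
  · exact (Subsingleton.elim _ _).le
  · refine le_algebraMap_of_spectrum_le fun r hr ↦ ?_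
    calc r ≤ ‖(r : 𝕜)‖ := by simpa using le_abs_self r
      _ ≤ ‖A‖ := spectrum.norm_le_norm_of_mem (spectrum.algebraMap_mem 𝕜 hr)

theorem conjTranspose_mul_self_le_l2_opNorm_sq (A : Matrix m n 𝕜) :
    Aᴴ * A ≤ algebraMap ℝ (Matrix n n 𝕜) (‖A‖ ^ 2) := by
  rw [sq, ← l2_opNorm_conjTranspose_mul_self]
  exact le_algebraMap_l2_opNorm_of_isSelfAdjoint (isHermitian_conjTranspose_mul_self A)

theorem conjTranspose_mul_self_le_l2_opNorm_mul_inv_sq_smul (A : Matrix m n 𝕜) {S : Matrix n n 𝕜}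
    (hS : IsUnit S) :
    Aᴴ * A ≤ ‖A * S⁻¹‖ ^ 2 • (Sᴴ * S) := by
  have hdet : IsUnit S.det := S.isUnit_iff_isUnit_det.1 hS
  calc Aᴴ * A = (A * S⁻¹ * S)ᴴ * (A * S⁻¹ * S) := by
        rw [nonsing_inv_mul_cancel_right _ _ hdet]
    _ = star S * ((A * S⁻¹)ᴴ * (A * S⁻¹)) * S := by
        simp only [conjTranspose_mul, star_eq_conjTranspose, Matrix.mul_assoc]
    _ ≤ star S * algebraMap ℝ (Matrix n n 𝕜) (‖A * S⁻¹‖ ^ 2) * S :=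
        star_left_conjugate_le_conjugate (conjTranspose_mul_self_le_l2_opNorm_sq _) S
    _ = ‖A * S⁻¹‖ ^ 2 • (Sᴴ * S) := by
        simp [Algebra.algebraMap_eq_smul_one, star_eq_conjTranspose]

theorem mul_self_le_l2_opNorm_smul {H : Matrix n n 𝕜} (hH : 0 ≤ H) : H * H ≤ ‖H‖ • H := by
  have sqrt_mul_sqrt : CFC.sqrt H * CFC.sqrt H = H := CFC.sqrt_mul_sqrt_self H hH
  calc H * H = CFC.sqrt H * (CFC.sqrt H * CFC.sqrt H) * CFC.sqrt H := by
        rw [← mul_assoc, sqrt_mul_sqrt, mul_assoc, sqrt_mul_sqrt]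
    _ = CFC.sqrt H * H * CFC.sqrt H := by rw [sqrt_mul_sqrt]
    _ ≤ CFC.sqrt H * algebraMap ℝ (Matrix n n 𝕜) ‖H‖ * CFC.sqrt H :=
        conjugate_le_conjugate_of_nonneg
          (le_algebraMap_l2_opNorm_of_isSelfAdjoint (.of_nonneg hH)) (CFC.sqrt_nonneg H)
    _ = ‖H‖ • H := by
        simp [Algebra.algebraMap_eq_smul_one, sqrt_mul_sqrt]

theorem posDef_sub_gram_sub_mul_self {H S : Matrix n n 𝕜} (hS : IsUnit S) (hSH : Sᴴ * S = H)
    (E : Matrix m n 𝕜) {α β : ℝ} (hα : 0 ≤ α) (hβ : 0 ≤ β)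
    (hαβ : α * ‖E * S⁻¹‖ ^ 2 + β * ‖H‖ < 1) :
    (H - α • (Eᴴ * E) - β • (H * H)).PosDef := by
  have hH : H.PosDef := hSH ▸ .conjTranspose_mul_self S (mulVec_injective_of_isUnit hS)
  have gram_le : Eᴴ * E ≤ ‖E * S⁻¹‖ ^ 2 • H :=
    hSH ▸ conjTranspose_mul_self_le_l2_opNorm_mul_inv_sq_smul E hS
  have sq_le : H * H ≤ ‖H‖ • H := mul_self_le_l2_opNorm_smul hH.posSemidef.nonneg
  rw [sub_sub]
  refine posDef_sub_of_le_smul hH hαβ ?_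
  calc α • (Eᴴ * E) + β • (H * H)
      ≤ α • (‖E * S⁻¹‖ ^ 2 • H) + β • (‖H‖ • H) := by gcongr
    _ = (α * ‖E * S⁻¹‖ ^ 2 + β * ‖H‖) • H := by module

theorem spectralNorm2_eq_l2_opNorm {m n : ℕ} (A : Matrix (Fin m) (Fin n) ℝ) :
    spectralNorm2 A = ‖A‖ := rfl

end LoewnerBounds

theorem Qmat_eq_fromBlocks_add_gram {n m : ℕ} {H : Matrix (Fin n) (Fin n) ℝ} (hH : H.IsHermitian)
    (E : Matrix (Fin m) (Fin n) ℝ) (α : ℝ) :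
    Qmat H E α =
      fromBlocks
        (H - α • (Eᵀ * E) - (α / 4) • (H * H) + α • (((1 / 2 : ℝ) • H)ᴴ * ((1 / 2 : ℝ) • H)))
        (α • (((1 / 2 : ℝ) • H)ᴴ * Eᵀ)) (α • (Eᵀᴴ * ((1 / 2 : ℝ) • H))) (α • (Eᵀᴴ * Eᵀ)) := by
  rw [Qmat, conjTranspose_smul, hH.eq, conjTranspose_eq_transpose_of_trivial Eᵀ,
    transpose_transpose, star_trivial]
  simp only [Matrix.smul_mul, Matrix.mul_smul, smul_smul]
  congr 1 <;> module

/-- For `H` symmetric positive definite, `E` of full row rank `m`, and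
`0 < α < 1/max{‖E‖₂, ‖EH^{-1/2}‖₂² + ‖H‖₂/4}`, the symmetric block matrix
`Q = [[H - αEᵀE, (α/2)HEᵀ],[(α/2)EH, αEEᵀ]]` is positive definite; equivalently, its
quadratic form decomposes as
`δzᵀQδz = δxᵀ(H - αEᵀE - (α/4)H²)δx + α‖Eᵀδν + (1/2)Hδx‖₂²`. -/
theorem stmt4 {n m : ℕ} (H : Matrix (Fin n) (Fin n) ℝ) (hH : H.PosDef)
    (E : Matrix (Fin m) (Fin n) ℝ) (hrank : E.rank = m) (α : ℝ) (hα0 : 0 < α)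
    (hα : α < 1 / max (spectralNorm2 E)
        (spectralNorm2 (E * (CFC.sqrt H)⁻¹) ^ 2 + spectralNorm2 H / 4)) :
    (Qmat H E α).PosDef ∧
    ∀ (δx : Fin n → ℝ) (δν : Fin m → ℝ),
      Sum.elim δx δν ⬝ᵥ (Qmat H E α *ᵥ Sum.elim δx δν) =
        δx ⬝ᵥ ((H - α • (Eᵀ * E) - (α / 4) • (H * H)) *ᵥ δx) +
          α * ((Eᵀ *ᵥ δν + (1 / 2 : ℝ) • (H *ᵥ δx)) ⬝ᵥ
                (Eᵀ *ᵥ δν + (1 / 2 : ℝ) • (H *ᵥ δx))) := by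
  have hHnonneg : 0 ≤ H := hH.posSemidef.nonneg
  have norm_bound_lt_one :
      α * spectralNorm2 (E * (CFC.sqrt H)⁻¹) ^ 2 + α / 4 * spectralNorm2 H < 1 := by
    linarith [mul_lt_one_of_lt_one_div_max hα0 hα]
  have sqrt_isUnit : IsUnit (CFC.sqrt H) := (CFC.isUnit_sqrt_iff H hHnonneg).2 hH.isUnit
  have sqrt_gram : (CFC.sqrt H)ᴴ * CFC.sqrt H = H := by
    rw [(CFC.sqrt_nonneg H).posSemidef.isHermitian.eq, CFC.sqrt_mul_sqrt_self H hHnonneg]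
  have Et_injective : Function.Injective Eᵀ.mulVec :=
    mulVec_injective_of_rank_eq_card (by rw [rank_transpose, hrank, Fintype.card_fin])
  have corner_posDef : (H - α • (Eᵀ * E) - (α / 4) • (H * H)).PosDef := by
    rw [spectralNorm2_eq_l2_opNorm, spectralNorm2_eq_l2_opNorm] at norm_bound_lt_one
    rw [← conjTranspose_eq_transpose_of_trivial E]
    exact posDef_sub_gram_sub_mul_self sqrt_isUnit sqrt_gram E hα0.le (by positivity)
      norm_bound_lt_one
  rw [Qmat_eq_fromBlocks_add_gram hH.isHermitian]
  refine ⟨posDef_fromBlocks_add_gram corner_posDef _ Et_injective hα0, fun δx δν ↦ ?_⟩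
  rw [add_comm (Eᵀ *ᵥ δν), ← smul_mulVec]
  simpa only [star_trivial] using
    star_dotProduct_fromBlocks_add_gram_mulVec _ ((1 / 2 : ℝ) • H) Eᵀ α δx δν
end
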